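/- arXiv:2308.02852 — 5 statements merged into one kernel-verified Lean document; each statement's English description precedes it below -/
import Mathlib

section
/- Consider a steady state of the DC microgrid, i.e. node voltages v ∈ ℝ^n, filter currents i_f ∈ ℝ^d, line currents i_π ∈ ℝ^e, load currents i_L ∈ ℝ^n and power references p_2,…,p_d ∈ ℝ satisfying (i) 0 = I_f i_f − i_L − M i_π, (ii) R i_π = Mᵀ v, (iii) p_i = (I_fᵀ v)_i (i_f)_i for i = 2,…,d, and (iv) (I_fᵀ v)_1 = v_ref with v_ref > 0. Then the grid-forming filter current vanishes, (i_f)_1 = 0, if and only if ∑_{i=2}^d p_i = P_L, where P_L = vᵀ i_L + i_πᵀ R i_π is the total load (loads plus line losses). -/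
open Matrix

/-- **Grid-forming current vanishes iff the grid-following references meet the load.**
A DC microgrid has `n` nodes, `d ≥ 1` DGUs (DGU `0` is the grid-forming one) and `e`
power lines with incidence matrix `M`.  `If` is a selection matrix assigning each DGU
to its node and `R` is the diagonal matrix of the strictly positive line resistances.
At a steady state satisfying
(i)  `0 = If i_f − iL − M iπ`,
(ii) `R iπ = Mᵀ v`,
(iii) `p i = (Ifᵀ v)_i (i_f)_i` for every grid-following DGU `i ≠ 0`, and
(iv) `(Ifᵀ v)_0 = v_ref > 0`,
the grid-forming filter current vanishes, `(i_f)_0 = 0`, if and only if the power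
references of the grid-following DGUs sum to the total load
`P_L = vᵀ iL + iπᵀ R iπ` (loads plus line losses). -/
theorem gridForming_current_zero_iff_power_balance
    (n d e : ℕ) (hd : 0 < d)
    (M : Matrix (Fin n) (Fin e) ℝ)
    (If : Matrix (Fin n) (Fin d) ℝ)
    (σ : Fin d → Fin n) (hσ : Function.Injective σ)
    (hIf : If = Matrix.of fun i j => if i = σ j then (1 : ℝ) else 0)
    (r : Fin e → ℝ) (hr : ∀ j, 0 < r j)
    (R : Matrix (Fin e) (Fin e) ℝ) (hR : R = Matrix.diagonal r)
    (v : Fin n → ℝ) (i_f : Fin d → ℝ) (iπ : Fin e → ℝ) (iL : Fin n → ℝ)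
    (p : Fin d → ℝ) (vref : ℝ)
    (h1 : (0 : Fin n → ℝ) = If.mulVec i_f - iL - M.mulVec iπ)
    (h2 : R.mulVec iπ = Mᵀ.mulVec v)
    (h3 : ∀ i : Fin d, i ≠ ⟨0, hd⟩ → p i = (Ifᵀ.mulVec v) i * i_f i)
    (h4 : (Ifᵀ.mulVec v) ⟨0, hd⟩ = vref) (hvref : 0 < vref)
    (PL : ℝ) (hPL : PL = v ⬝ᵥ iL + iπ ⬝ᵥ R.mulVec iπ) :
    i_f ⟨0, hd⟩ = 0 ↔ ∑ i ∈ Finset.univ.erase ⟨0, hd⟩, p i = PL := by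
  have hL : iL = If.mulVec i_f - M.mulVec iπ := by
    funext k
    have := congrFun h1 k
    simp only [Pi.zero_apply, Pi.sub_apply] at this ⊢
    linarith
  have e1 : v ⬝ᵥ If.mulVec i_f = ∑ i, (Ifᵀ.mulVec v) i * i_f i := by
    rw [Matrix.dotProduct_mulVec, Matrix.mulVec_transpose]
    rfl
  have e2 : iπ ⬝ᵥ R.mulVec iπ = v ⬝ᵥ M.mulVec iπ := by
    rw [h2, Matrix.dotProduct_mulVec v, Matrix.mulVec_transpose, dotProduct_comm]
  have e3 : PL = ∑ i, (Ifᵀ.mulVec v) i * i_f i := by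
    rw [hPL, e2, hL, dotProduct_sub, e1]
    ring
  have e4 : ∑ i ∈ Finset.univ.erase ⟨0, hd⟩, p i
      = ∑ i ∈ Finset.univ.erase ⟨0, hd⟩, (Ifᵀ.mulVec v) i * i_f i :=
    Finset.sum_congr rfl fun i hi => h3 i (Finset.ne_of_mem_erase hi)
  rw [e4, e3, ← Finset.add_sum_erase _ _ (Finset.mem_univ (⟨0, hd⟩ : Fin d)), h4]
  constructor
  · intro h
    rw [h]
    ring
  · intro h
    have h0 : vref * i_f ⟨0, hd⟩ = 0 := by linarith
    exact (mul_eq_zero.mp h0).resolve_left hvref.ne'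
end

section
/- Let S ∈ ℝ^{N×N} be symmetric positive definite, A : ℝ^N → ℝ^{N×N} a state-dependent matrix-valued map, B ∈ ℝ^{N×m}, C ∈ ℝ^{m×N}, and X ⊆ ℝ^N. Assume that for every y ∈ X the symmetric block matrix [[A(y)ᵀS + SA(y), SB − Cᵀ],[BᵀS − C, 0]] is negative semidefinite. Then along any differentiable trajectory x : ℝ → ℝ^N satisfying x′(t) = A(x(t)) x(t) + B u(t) for an input u : ℝ → ℝ^m, the storage function V(t) = x(t)ᵀ S x(t) satisfies V′(t) ≤ 2 u(t)ᵀ C x(t) at every t with x(t) ∈ X; i.e., the system is passive with respect to the port (u, Cx). -/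
open Matrix

/-- A real matrix `M` is negative semidefinite if it is symmetric and its quadratic
form is nonpositive. -/
def Matrix.NegSemidefR {ι : Type*} [Fintype ι] (M : Matrix ι ι ℝ) : Prop :=
  Mᵀ = M ∧ ∀ z : ι → ℝ, z ⬝ᵥ M.mulVec z ≤ 0

/-- **LMI certificate of passivity of the electric port.**
Let `S` be symmetric positive definite, `A` a state-dependent matrix map,
`B ∈ ℝ^{N×m}`, `C ∈ ℝ^{m×N}` and `X ⊆ ℝ^N`.  If for every `y ∈ X` the block matrix
`[[A(y)ᵀS + SA(y), SB − Cᵀ], [BᵀS − C, 0]]` is negative semidefinite, then along any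
differentiable trajectory of `ẋ = A(x)x + Bu`, the storage function
`V(t) = x(t)ᵀ S x(t)` satisfies `V′(t) ≤ 2 u(t)ᵀ C x(t)` whenever `x(t) ∈ X`;
i.e. the system is passive w.r.t. the port `(u, Cx)`. -/
theorem electric_port_passivity
    (N m : ℕ)
    (S : Matrix (Fin N) (Fin N) ℝ) (hS : S.PosDef)
    (A : (Fin N → ℝ) → Matrix (Fin N) (Fin N) ℝ)
    (B : Matrix (Fin N) (Fin m) ℝ) (C : Matrix (Fin m) (Fin N) ℝ)
    (X : Set (Fin N → ℝ))
    (hLMI : ∀ y ∈ X,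
      (Matrix.fromBlocks ((A y)ᵀ * S + S * A y) (S * B - Cᵀ) (Bᵀ * S - C)
        (0 : Matrix (Fin m) (Fin m) ℝ)).NegSemidefR)
    (x : ℝ → Fin N → ℝ) (u : ℝ → Fin m → ℝ)
    (hx : ∀ t : ℝ, HasDerivAt x ((A (x t)).mulVec (x t) + B.mulVec (u t)) t) :
    ∀ t : ℝ, x t ∈ X →
      deriv (fun s => x s ⬝ᵥ S.mulVec (x s)) t ≤ 2 * (u t ⬝ᵥ C.mulVec (x t)) := by
  intro t ht
  have hSt : Sᵀ = S := by
    have h := hS.isHermitian.eq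
    rwa [Matrix.conjTranspose_eq_transpose_of_trivial] at h
  have hd := hx t
  generalize hv : (A (x t)).mulVec (x t) + B.mulVec (u t) = v at hd
  have hc : ∀ i, HasDerivAt (fun s => x s i) (v i) t := hasDerivAt_pi.1 hd
  have hm : ∀ i, HasDerivAt (fun s => S.mulVec (x s) i) (S.mulVec v i) t := by
    intro i
    simp only [Matrix.mulVec, dotProduct]
    exact HasDerivAt.fun_sum fun j _ => (hc j).const_mul (S i j)
  have hV : HasDerivAt (fun s => x s ⬝ᵥ S.mulVec (x s))
      (v ⬝ᵥ S.mulVec (x t) + x t ⬝ᵥ S.mulVec v) t := by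
    simp only [dotProduct, ← Finset.sum_add_distrib]
    exact HasDerivAt.fun_sum fun j _ => (hc j).mul (hm j)
  rw [hV.deriv]
  have hq := (hLMI (x t) ht).2 (Sum.elim (x t) (u t))
  have hsw : ∀ a b : Fin N → ℝ, a ⬝ᵥ S.mulVec b = b ⬝ᵥ S.mulVec a := by
    intro a b
    rw [dotProduct_mulVec, ← mulVec_transpose, hSt, dotProduct_comm]
  have h1 : x t ⬝ᵥ (A (x t))ᵀ.mulVec (S.mulVec (x t))
      = x t ⬝ᵥ S.mulVec ((A (x t)).mulVec (x t)) := by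
    rw [dotProduct_mulVec, vecMul_transpose, hsw]
  have h2 : u t ⬝ᵥ Bᵀ.mulVec (S.mulVec (x t)) = x t ⬝ᵥ S.mulVec (B.mulVec (u t)) := by
    rw [dotProduct_mulVec, vecMul_transpose, hsw]
  have h3 : x t ⬝ᵥ Cᵀ.mulVec (u t) = u t ⬝ᵥ C.mulVec (x t) := by
    rw [dotProduct_mulVec, vecMul_transpose, dotProduct_comm]
  rw [fromBlocks_mulVec] at hq
  simp only [sumElim_dotProduct_sumElim, Sum.elim_comp_inl, Sum.elim_comp_inr, add_mulVec,
    sub_mulVec, dotProduct_add, dotProduct_sub, ← mulVec_mulVec, zero_mulVec, dotProduct_zero,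
    h1, h2, h3] at hq
  rw [hsw v, ← hv]
  simp only [mulVec_add, dotProduct_add]
  linarith
end

section
/- Let S ∈ ℝ^{N×N} be symmetric positive definite, A : ℝ^N → ℝ^{N×N} a state-dependent matrix-valued map, B ∈ ℝ^{N×m}, C ∈ ℝ^{m×N}, b ∈ ℝ^N, c ∈ ℝ^N, ν, ρ ∈ ℝ, and X ⊆ ℝ^N. Assume that for every y ∈ X the symmetric block matrix [[A(y)ᵀS + SA(y) + ρ c cᵀ, SB − Cᵀ, Sb − c],[BᵀS − C, 0, 0],[bᵀS − cᵀ, 0, ν]] is negative semidefinite. Then for every x ∈ X, u ∈ ℝ^m and λ ∈ ℝ: 2 xᵀ S (A(x) x + B u + b λ) ≤ 2 uᵀ C x + 2 λ (cᵀ x) − ν λ² − ρ (cᵀ x)². In particular, the system ẋ = A(x)x + Bu + bλ with outputs Cx and cᵀx is input-feedforward and output-feedback passive with respect to both ports, with passivity indices ν and ρ for the port (λ, cᵀx). -/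
open Matrix

/-- **LMI certificate of input-feedforward output-feedback passivity of the electric
and economic ports.**  If for every `y ∈ X` the block matrix
`[[A(y)ᵀS + SA(y) + ρ c cᵀ, SB − Cᵀ, Sb − c], [BᵀS − C, 0, 0], [bᵀS − cᵀ, 0, ν]]`
is negative semidefinite, then for every state `x ∈ X`, electric-port input `u` and
economic-port input `λ`,
`2 xᵀ S (A(x) x + B u + b λ) ≤ 2 uᵀ C x + 2 λ (cᵀ x) − ν λ² − ρ (cᵀ x)²`,
i.e. the system `ẋ = A(x)x + Bu + bλ` with outputs `Cx` and `cᵀx` is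
input-feedforward and output-feedback passive w.r.t. both ports with indices `ν`, `ρ`
for the economic port. -/
theorem economic_port_passivity
    (N m : ℕ)
    (S : Matrix (Fin N) (Fin N) ℝ) (hS : S.PosDef)
    (A : (Fin N → ℝ) → Matrix (Fin N) (Fin N) ℝ)
    (B : Matrix (Fin N) (Fin m) ℝ) (C : Matrix (Fin m) (Fin N) ℝ)
    (b : Fin N → ℝ) (c : Fin N → ℝ) (ν ρ : ℝ)
    (X : Set (Fin N → ℝ))
    (hLMI : ∀ y ∈ X,
      (Matrix.fromBlocks
        ((A y)ᵀ * S + S * A y + ρ • Matrix.vecMulVec c c)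
        (Matrix.of fun i j => Sum.elim (fun j' => (S * B - Cᵀ) i j')
          (fun _ : Fin 1 => (S.mulVec b - c) i) j)
        (Matrix.of fun i j => Sum.elim (fun i' => (Bᵀ * S - C) i' j)
          (fun _ : Fin 1 => (b ᵥ* S - c) j) i)
        (Matrix.fromBlocks (0 : Matrix (Fin m) (Fin m) ℝ) 0 0
          (Matrix.of fun _ _ : Fin 1 => ν))).NegSemidefR)
    :
    ∀ x ∈ X, ∀ (u : Fin m → ℝ) (lam : ℝ),
      2 * (x ⬝ᵥ S.mulVec ((A x).mulVec x + B.mulVec u + lam • b)) ≤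
        2 * (u ⬝ᵥ C.mulVec x) + 2 * lam * (c ⬝ᵥ x) - ν * lam ^ 2 - ρ * (c ⬝ᵥ x) ^ 2 := by
  intro x hx u lam
  have h := (hLMI x hx).2 (Sum.elim x (Sum.elim u (fun _ => lam)))
  have hSt : Sᵀ = S := by
    have := hS.isHermitian
    rwa [Matrix.IsHermitian, Matrix.conjTranspose_eq_transpose_of_trivial] at this
  have h12 : (Matrix.of fun i j => Sum.elim (fun j' => (S * B - Cᵀ) i j')
          (fun _ : Fin 1 => (S.mulVec b - c) i) j).mulVec (Sum.elim u (fun _ => lam))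
      = (S * B - Cᵀ).mulVec u + lam • (S.mulVec b - c) := by
    ext i
    simp [Matrix.mulVec, dotProduct, Fintype.sum_sum_type, mul_comm]
  have h21 : (Matrix.of fun i j => Sum.elim (fun i' => (Bᵀ * S - C) i' j)
          (fun _ : Fin 1 => (b ᵥ* S - c) j) i).mulVec x
      = Sum.elim ((Bᵀ * S - C).mulVec x) (fun _ => (b ᵥ* S - c) ⬝ᵥ x) := by
    ext i
    rcases i with i | i <;> rfl
  have h22 : (Matrix.of fun _ _ : Fin 1 => ν).mulVec (fun _ => lam) = fun _ => ν * lam := by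
    ext i
    simp [Matrix.mulVec, dotProduct]
  have hs : ∀ v w : Fin N → ℝ, v ⬝ᵥ S *ᵥ w = w ⬝ᵥ S *ᵥ v := by
    intro v w
    rw [dotProduct_mulVec, ← mulVec_transpose, hSt, dotProduct_comm]
  have e1 : x ⬝ᵥ ((A x)ᵀ * S) *ᵥ x = x ⬝ᵥ S *ᵥ (A x *ᵥ x) := by
    rw [← mulVec_mulVec, dotProduct_mulVec, vecMul_transpose, hs]
  have e2 : u ⬝ᵥ (Bᵀ * S) *ᵥ x = x ⬝ᵥ S *ᵥ (B *ᵥ u) := by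
    rw [← mulVec_mulVec, dotProduct_mulVec, vecMul_transpose, hs]
  have e3 : (b ᵥ* S) ⬝ᵥ x = x ⬝ᵥ S *ᵥ b := by
    rw [← dotProduct_mulVec, hs]
  have e4 : x ⬝ᵥ Cᵀ *ᵥ u = u ⬝ᵥ C *ᵥ x := by
    rw [dotProduct_mulVec, vecMul_transpose, dotProduct_comm]
  have e5 : x ⬝ᵥ (vecMulVec c c) *ᵥ x = (c ⬝ᵥ x) ^ 2 := by
    rw [vecMulVec_mulVec]
    simp [dotProduct_comm x c, sq]
  have e6 : ((fun _ => lam : Fin 1 → ℝ)) ⬝ᵥ (fun _ => (b ᵥ* S - c) ⬝ᵥ x)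
      = lam * (x ⬝ᵥ S *ᵥ b - c ⬝ᵥ x) := by
    rw [sub_dotProduct, e3]; simp [dotProduct]
  have e7 : ((fun _ => lam : Fin 1 → ℝ)) ⬝ᵥ (fun _ => ν * lam) = lam * (ν * lam) := by
    simp [dotProduct]
  have e8 : x ⬝ᵥ (S * A x) *ᵥ x = x ⬝ᵥ S *ᵥ (A x *ᵥ x) := by rw [mulVec_mulVec]
  have e9 : x ⬝ᵥ (S * B) *ᵥ u = x ⬝ᵥ S *ᵥ (B *ᵥ u) := by rw [mulVec_mulVec]
  rw [fromBlocks_mulVec, Sum.elim_comp_inl, Sum.elim_comp_inr, h12, h21, fromBlocks_mulVec,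
    Sum.elim_comp_inl, Sum.elim_comp_inr, h22] at h
  simp only [sumElim_dotProduct_sumElim, dotProduct_add, add_mulVec, sub_mulVec, zero_mulVec,
    dotProduct_sub, dotProduct_smul, smul_mulVec, smul_eq_mul, dotProduct_zero, zero_add, add_zero,
    e1, e2, e4, e5, e6, e7, e8, e9, dotProduct_comm x c] at h
  simp only [mulVec_add, mulVec_smul, dotProduct_add, dotProduct_smul, smul_eq_mul]
  nlinarith [h]
end

section
/- Let N ≥ 1, let τ_1,…,τ_N > 0, q_1,…,q_N > 0 and κ > 0, and set T = diag(τ_i), Q = diag(q_i). Consider the (N+1)×(N+1) real block matrix M = [[−2 T Q, T 1_N],[−κ 1_Nᵀ, 0]], which is the system matrix of the primal-dual price controller ṗ_i = −τ_i(2 q_i p_i + r_i − λ), λ̇ = κ(P_L − ∑_i p_i) in coordinates shifted by its equilibrium. Then every eigenvalue of M over ℂ has strictly negative real part, i.e. M is Hurwitz. -/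
open Matrix

/-- **The primal-dual price controller is Hurwitz.**
With gains `τ i > 0`, cost curvatures `q i > 0` and price gain `κ > 0`, set
`T = diag(τ)` and `Q = diag(q)`.  The system matrix
`M = [[−2 T Q, T 1_N], [−κ 1_Nᵀ, 0]]` of the primal-dual gradient dynamics
`ṗ_i = −τ_i (2 q_i p_i + r_i − λ)`, `λ̇ = κ (P_L − ∑ p_i)` (in coordinates shifted
by the equilibrium) has all its eigenvalues (over `ℂ`) in the open left half plane. -/
theorem primal_dual_price_controller_hurwitz
    (N : ℕ) (hN : 1 ≤ N)
    (τ q : Fin N → ℝ) (hτ : ∀ i, 0 < τ i) (hq : ∀ i, 0 < q i)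
    (κ : ℝ) (hκ : 0 < κ)
    (M : Matrix (Fin N ⊕ Fin 1) (Fin N ⊕ Fin 1) ℝ)
    (hM : M = Matrix.fromBlocks
      (-(2 : ℝ) • (Matrix.diagonal τ * Matrix.diagonal q))
      (Matrix.of fun i (_ : Fin 1) => τ i)
      (Matrix.of fun (_ : Fin 1) _ => -κ)
      (0 : Matrix (Fin 1) (Fin 1) ℝ)) :
    ∀ μ ∈ spectrum ℂ (M.map (Complex.ofReal : ℝ → ℂ)), μ.re < 0 := by
  intro μ hμ
  rw [← Matrix.spectrum_toLin', ← Module.End.hasEigenvalue_iff_mem_spectrum] at hμ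
  obtain ⟨v, hv⟩ := hμ.exists_hasEigenvector
  have hv0 : v ≠ 0 := hv.2
  have hE : (M.map (Complex.ofReal : ℝ → ℂ)) *ᵥ v = μ • v := by
    have := hv.apply_eq_smul
    rwa [Matrix.toLin'_apply] at this
  have h1 : ∀ i, -(2 * τ i * q i) * v (Sum.inl i) + τ i * v (Sum.inr 0)
      = μ * v (Sum.inl i) := by
    intro i
    have := congrFun hE (Sum.inl i)
    subst hM
    simp [Matrix.mulVec, dotProduct, Matrix.diagonal_apply, apply_ite,
      ite_mul, Finset.sum_ite_eq] at this
    rw [← this]; ring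
  have h2 : -κ * ∑ i, v (Sum.inl i) = μ * v (Sum.inr 0) := by
    have := congrFun hE (Sum.inr 0)
    subst hM
    simp [Matrix.mulVec, dotProduct] at this
    rw [← this, Finset.mul_sum]; simp
  by_contra! hre
  have hpos : ∀ i, 0 < (μ + 2 * τ i * q i).re := by
    intro i
    have := mul_pos (hτ i) (hq i)
    simp
    nlinarith
  have hne : ∀ i, μ + 2 * τ i * q i ≠ 0 := by
    intro i h
    have := hpos i
    rw [h] at this
    simp at this
  have hp : ∀ i, v (Sum.inl i) = (τ i * (μ + 2 * τ i * q i)⁻¹) * v (Sum.inr 0) := by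
    intro i
    apply mul_right_cancel₀ (hne i)
    have e : (τ i * (μ + 2 * τ i * q i)⁻¹) * v (Sum.inr 0) * (μ + 2 * τ i * q i)
        = τ i * v (Sum.inr 0) * ((μ + 2 * τ i * q i)⁻¹ * (μ + 2 * τ i * q i)) := by ring
    rw [e, inv_mul_cancel₀ (hne i)]
    linear_combination -h1 i
  have hl : v (Sum.inr 0) ≠ 0 := by
    intro h
    apply hv0
    ext j
    rcases j with i | j
    · simp [hp i, h]
    · rw [Subsingleton.elim j 0]; simpa using h
  have h3 : μ = -κ * ∑ i, (τ i * (μ + 2 * τ i * q i)⁻¹) := by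
    apply mul_right_cancel₀ hl
    rw [← h2, mul_assoc, Finset.sum_mul]
    congr 1
    exact Finset.sum_congr rfl fun i _ => hp i
  have hs : 0 < (∑ i, ((τ i : ℂ) * (μ + 2 * τ i * q i)⁻¹)).re := by
    rw [Complex.re_sum]
    apply Finset.sum_pos
    · intro i _
      rw [Complex.re_ofReal_mul, Complex.inv_re]
      exact mul_pos (hτ i) (div_pos (hpos i) (Complex.normSq_pos.mpr (hne i)))
    · exact ⟨⟨0, hN⟩, Finset.mem_univ _⟩
  have h4 := congrArg Complex.re h3
  rw [← Complex.ofReal_neg, Complex.re_ofReal_mul] at h4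
  nlinarith [mul_pos hκ hs]
end

section
/- Consider a steady state of the DC microgrid, i.e. node voltages v ∈ ℝ^n, filter currents i_f ∈ ℝ^d, line currents i_π ∈ ℝ^e, load currents i_L ∈ ℝ^n and power references p_2,…,p_d ∈ ℝ satisfying (i) 0 = I_f i_f − i_L − M i_π, (ii) R i_π = Mᵀ v, (iii) p_i = (I_fᵀ v)_i (i_f)_i for i = 2,…,d, and (iv) (I_fᵀ v)_1 = v_ref with v_ref > 0. Suppose in addition that (i_f)_1 = 0 and that there exists λ̄ ∈ ℝ with 2 q_i p_i + r_i = λ̄ for every i = 2,…,d. Then (p_2,…,p_d) is a global minimizer of ∑_{i=2}^d f_i(p_i) over all (p_2,…,p_d) with ∑_{i=2}^d p_i = P_L, where P_L = vᵀ i_L + i_πᵀ R i_π; i.e., the closed-loop equilibrium achieves economically optimal dispatch. -/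
open Matrix Finset

/-- **Closed-loop equilibria achieve economically optimal dispatch.**
Consider a steady state of the DC microgrid (`If` a selection matrix assigning DGUs
to nodes, DGU `0` grid-forming, `R = diag(r)` with `r > 0` the line resistances):
(i)  `0 = If i_f − iL − M iπ`, (ii) `R iπ = Mᵀ v`,
(iii) `p i = (Ifᵀ v)_i (i_f)_i` for `i ≠ 0`, (iv) `(Ifᵀ v)_0 = v_ref > 0`.
If moreover `(i_f)_0 = 0` and all grid-following DGUs produce at a common marginal
cost `λ̄` (i.e. `2 q i p i + r i = λ̄`), then `(p i)_{i ≠ 0}` globally minimizes the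
total cost `∑_{i ≠ 0} (q i p i² + rc i p i + s i)` among all dispatches summing to
the total load `P_L = vᵀ iL + iπᵀ R iπ`. -/
theorem equilibrium_optimal_dispatch
    (n d e : ℕ) (hd : 0 < d)
    (M : Matrix (Fin n) (Fin e) ℝ)
    (If : Matrix (Fin n) (Fin d) ℝ)
    (σ : Fin d → Fin n) (hσ : Function.Injective σ)
    (hIf : If = Matrix.of fun i j => if i = σ j then (1 : ℝ) else 0)
    (r : Fin e → ℝ) (hr : ∀ j, 0 < r j)
    (R : Matrix (Fin e) (Fin e) ℝ) (hR : R = Matrix.diagonal r)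
    (v : Fin n → ℝ) (i_f : Fin d → ℝ) (iπ : Fin e → ℝ) (iL : Fin n → ℝ)
    (p : Fin d → ℝ) (vref : ℝ)
    (q rc s : Fin d → ℝ) (hq : ∀ i : Fin d, i ≠ ⟨0, hd⟩ → 0 < q i)
    (h1 : (0 : Fin n → ℝ) = If.mulVec i_f - iL - M.mulVec iπ)
    (h2 : R.mulVec iπ = Mᵀ.mulVec v)
    (h3 : ∀ i : Fin d, i ≠ ⟨0, hd⟩ → p i = (Ifᵀ.mulVec v) i * i_f i)
    (h4 : (Ifᵀ.mulVec v) ⟨0, hd⟩ = vref) (hvref : 0 < vref)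
    (hgf : i_f ⟨0, hd⟩ = 0)
    (lam : ℝ) (hmarg : ∀ i : Fin d, i ≠ ⟨0, hd⟩ → 2 * q i * p i + rc i = lam)
    (PL : ℝ) (hPL : PL = v ⬝ᵥ iL + iπ ⬝ᵥ R.mulVec iπ) :
    ∀ p' : Fin d → ℝ, (∑ i ∈ Finset.univ.erase ⟨0, hd⟩, p' i) = PL →
      (∑ i ∈ Finset.univ.erase ⟨0, hd⟩, (q i * (p i) ^ 2 + rc i * p i + s i)) ≤
        (∑ i ∈ Finset.univ.erase ⟨0, hd⟩, (q i * (p' i) ^ 2 + rc i * p' i + s i)) := by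
  have hsum : (∑ i ∈ Finset.univ.erase ⟨0, hd⟩, p i) = PL := by
    have e1 : iL = If.mulVec i_f - M.mulVec iπ := by
      funext k
      have := congrFun h1 k
      simp only [Pi.zero_apply, Pi.sub_apply] at this ⊢
      linarith
    have e2 : iπ ⬝ᵥ Mᵀ.mulVec v = v ⬝ᵥ M.mulVec iπ := by
      rw [Matrix.mulVec_transpose, dotProduct_comm, Matrix.dotProduct_mulVec]
    have e3 : PL = ∑ i, (Ifᵀ.mulVec v) i * i_f i := by
      rw [hPL, h2, e2, e1, dotProduct_sub, sub_add_cancel, Matrix.dotProduct_mulVec,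
        Matrix.mulVec_transpose]
      rfl
    rw [e3, ← Finset.add_sum_erase _ _ (Finset.mem_univ (⟨0, hd⟩ : Fin d)), hgf, mul_zero,
      zero_add]
    exact Finset.sum_congr rfl fun i hi => h3 i (Finset.ne_of_mem_erase hi)
  intro p' hp'
  have key : ∑ i ∈ Finset.univ.erase ⟨0, hd⟩,
      ((q i * (p i) ^ 2 + rc i * p i + s i) + lam * (p' i - p i)) ≤
        ∑ i ∈ Finset.univ.erase ⟨0, hd⟩, (q i * (p' i) ^ 2 + rc i * p' i + s i) := by
    refine Finset.sum_le_sum fun i hi => ?_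
    have hi' := Finset.ne_of_mem_erase hi
    rw [← hmarg i hi']
    nlinarith [mul_nonneg (hq i hi').le (sq_nonneg (p' i - p i))]
  rw [Finset.sum_add_distrib, ← Finset.mul_sum, Finset.sum_sub_distrib, hp', hsum, sub_self,
    mul_zero, add_zero] at key
  exact key
end
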